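/- In the Nehari setting, the ground state level admits the min-max characterization: inf{Φ(u) : u ∈ N} = inf{ sup_{s>0} Φ(sw) : w ∈ H¹(V)\{0} }, where N = {u ∈ H¹(V)\{0} : Φ'(u)u = 0} is the Nehari manifold. -/

import Mathlib

open scoped ENNReal

noncomputable section

/-- `H¹(V)`: as a set, the ℓ²-summable real functions on the vertex set;
the `H¹` norm is equivalent to the ℓ² norm by the uniform degree bound. -/
abbrev H1 (Vtx : Type*) := lp (fun _ : Vtx => ℝ) 2

variable {Vtx : Type*}

/-- `Γ(u,v)(x) = (1/2) Σ_{y∼x} (u(y)-u(x))(v(y)-v(x))`. -/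
def gammaProd (adj : Vtx → Vtx → Prop) (u v : Vtx → ℝ) (x : Vtx) : ℝ :=
  (1/2) * ∑' y : {y : Vtx // adj x y}, (u y.1 - u x) * (v y.1 - v x)

/-- `|∇u|²(x) = (1/2) Σ_{y∼x} (u(y)-u(x))²`. -/
def gradSq (adj : Vtx → Vtx → Prop) (u : Vtx → ℝ) (x : Vtx) : ℝ :=
  gammaProd adj u u x

/-- `Δu(x) = Σ_{y∼x} (u(y)-u(x))`. -/
def graphLap (adj : Vtx → Vtx → Prop) (u : Vtx → ℝ) (x : Vtx) : ℝ :=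
  ∑' y : {y : Vtx // adj x y}, (u y.1 - u x)

/-- the norm `‖u‖` induced by the potential `V`:
`‖u‖² = Σ_x (|∇u|²(x) + V(x)u(x)²)`. -/
def nrmV (adj : Vtx → Vtx → Prop) (Vp : Vtx → ℝ) (u : Vtx → ℝ) : ℝ :=
  Real.sqrt (∑' x, (gradSq adj u x + Vp x * (u x)^2))

/-- the `V`-norm of an element of `H¹`. -/
def nrmH (adj : Vtx → Vtx → Prop) (Vp : Vtx → ℝ) (u : H1 Vtx) : ℝ :=
  nrmV adj Vp (fun y => u y)

/-- `⟨u,v⟩ = Σ_x (Γ(u,v)(x) + V(x)u(x)v(x))`. -/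
def iprodH (adj : Vtx → Vtx → Prop) (Vp : Vtx → ℝ) (u v : H1 Vtx) : ℝ :=
  ∑' x, (gammaProd adj (fun y => u y) (fun y => v y) x + Vp x * u x * v x)

/-- the variational functional `Φ(u) = ½‖u‖² − Σ_x F(x,u(x))`. -/
def PhiF (adj : Vtx → Vtx → Prop) (Vp : Vtx → ℝ) (F : Vtx → ℝ → ℝ) (u : H1 Vtx) : ℝ :=
  (1/2) * ∑' x, (gradSq adj (fun y => u y) x + Vp x * (u x)^2) - ∑' x, F x (u x)

/-- the Nehari manifold `N = {u ∈ H¹\{0} : Φ'(u)u = 0}`. -/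
def Nehari (adj : Vtx → Vtx → Prop) (Vp : Vtx → ℝ) (F : Vtx → ℝ → ℝ) : Set (H1 Vtx) :=
  {u | u ≠ 0 ∧ fderiv ℝ (PhiF adj Vp F) u u = 0}

/-- adjacency of the lattice graph `ℤ^N`. -/
def adjZ (N : ℕ) (x y : Fin N → ℤ) : Prop := (∑ i, (x i - y i).natAbs) = 1

end

/-!
Monotonicity of `t ↦ f x t / |t|` gives `(s² - 1) / 2 * f x t * t ≤ F x (s * t) - F x t` for
`s > 0`. Summed over the vertices at a point `u` of the Nehari manifold, where
`‖u‖² = ∑ f(x, u(x)) u(x)`, this says `Φ(s u) ≤ Φ(u)`: such a `u` maximizes `Φ` on its ray.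
Conversely, on every ray `Φ` is positive near the origin, because `∑ F(x, u(x)) = o(‖u‖²)`, and
eventually nonpositive, because `F` is superquadratic; so it has a local maximum at some `s > 0`,
and the corresponding point of the ray lies on the Nehari manifold. Hence the values of `Φ` on the
manifold are exactly the suprema of `Φ` over rays, and not only do their infima agree.
-/

open Filter Topology Asymptotics Set

noncomputable section

/-! ### Suprema over rays -/

section Rays

variable {E : Type*} [NormedAddCommGroup E] [NormedSpace ℝ E]

/-- The Nehari set of a functional on a normed space: the nonzero points at which its derivative
vanishes in the radial direction. `Nehari adj Vp F` is the case `Φ = PhiF adj Vp F`. -/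
def nehariSet (Φ : E → ℝ) : Set E :=
  {u | u ≠ 0 ∧ fderiv ℝ Φ u u = 0}

theorem exists_pos_isLocalMax {φ : ℝ → ℝ} (hφ : Continuous φ) (h0 : φ 0 ≤ 0)
    (hpos : ∃ s > 0, 0 < φ s) (htop : ∀ᶠ s in atTop, φ s ≤ 0) : ∃ s > 0, IsLocalMax φ s := by
  obtain ⟨s₀, hs₀, hφs₀⟩ := hpos
  have hfar : ∀ᶠ s in cocompact ℝ ⊓ 𝓟 (Ici 0), φ s ≤ φ s₀ := by
    rw [cocompact_eq_atBot_atTop, eventually_inf_principal, eventually_sup]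
    exact ⟨(eventually_lt_atBot 0).mono fun s hs h => absurd hs (not_lt.2 h),
      htop.mono fun s hs _ => hs.trans hφs₀.le⟩
  obtain ⟨s, hs, hmax⟩ := hφ.continuousOn.exists_isMaxOn' isClosed_Ici hs₀.le hfar
  have hs_pos : 0 < s := hs.lt_of_ne fun h =>
    ((h0.trans_lt hφs₀).trans_le (hmax hs₀.le)).ne (congrArg φ h)
  exact ⟨s, hs_pos, hmax.isLocalMax (Ici_mem_nhds hs_pos)⟩

theorem hasDerivAt_comp_smul {Φ : E → ℝ} (hΦ : Differentiable ℝ Φ) (w : E) (s : ℝ) :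
    HasDerivAt (fun s : ℝ => Φ (s • w)) (fderiv ℝ Φ (s • w) w) s := by
  have hray : HasDerivAt (fun s : ℝ => s • w) w s := by
    simpa using (hasDerivAt_id s).smul_const w
  exact (hΦ (s • w)).hasFDerivAt.comp_hasDerivAt s hray

theorem exists_pos_smul_mem_nehariSet {Φ : E → ℝ} (hΦ : Differentiable ℝ Φ) {w : E} (hw : w ≠ 0)
    (h0 : Φ 0 ≤ 0) (hpos : ∃ s : ℝ, 0 < s ∧ 0 < Φ (s • w))
    (htop : ∀ᶠ s : ℝ in atTop, Φ (s • w) ≤ 0) : ∃ s : ℝ, 0 < s ∧ s • w ∈ nehariSet Φ := by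
  have hderiv := hasDerivAt_comp_smul hΦ w
  have hcont : Continuous fun s : ℝ => Φ (s • w) :=
    continuous_iff_continuousAt.2 fun s => (hderiv s).continuousAt
  obtain ⟨s, hs, hmax⟩ := exists_pos_isLocalMax hcont (by simpa using h0) hpos htop
  have hcrit : fderiv ℝ Φ (s • w) w = 0 := hmax.hasDerivAt_eq_zero (hderiv s)
  exact ⟨s, hs, smul_ne_zero hs.ne' hw, by rw [map_smul, hcrit, smul_zero]⟩

theorem sSup_image_ray_smul {Φ : E → ℝ} {u : E} (hu : ∀ s : ℝ, 0 < s → Φ (s • u) ≤ Φ u)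
    {r : ℝ} (hr : 0 < r) : sSup ((fun s : ℝ => Φ (s • r • u)) '' Ioi 0) = Φ u := by
  refine IsGreatest.csSup_eq ⟨⟨r⁻¹, inv_pos.2 hr, by simp only [inv_smul_smul₀ hr.ne']⟩, ?_⟩
  rintro _ ⟨s, hs, rfl⟩
  simpa only [smul_smul] using hu (s * r) (mul_pos hs hr)

theorem image_nehariSet_eq_sSup_rays {Φ : E → ℝ}
    (hmax : ∀ u ∈ nehariSet Φ, ∀ s : ℝ, 0 < s → Φ (s • u) ≤ Φ u)
    (hray : ∀ w : E, w ≠ 0 → ∃ s : ℝ, 0 < s ∧ s • w ∈ nehariSet Φ) :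
    Φ '' nehariSet Φ =
      {y : ℝ | ∃ w : E, w ≠ 0 ∧ y = sSup ((fun s : ℝ => Φ (s • w)) '' Ioi 0)} := by
  ext y
  constructor
  · rintro ⟨u, hu, rfl⟩
    exact ⟨u, hu.1, by simpa only [one_smul] using (sSup_image_ray_smul (hmax u hu) one_pos).symm⟩
  · rintro ⟨w, hw, rfl⟩
    obtain ⟨s, hs, hsw⟩ := hray w hw
    refine ⟨s • w, hsw, ?_⟩
    simpa only [inv_smul_smul₀ hs.ne'] using
      (sSup_image_ray_smul (hmax _ hsw) (inv_pos.2 hs)).symm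

section QuadraticMinus

variable {H : Type*} [NormedAddCommGroup H] [InnerProductSpace ℝ H] {T : E →L[ℝ] H} {I : E → ℝ}

theorem hasFDerivAt_half_norm_sq_sub {I' : E →L[ℝ] ℝ} {u : E} (hI : HasFDerivAt I I' u) :
    HasFDerivAt (fun v => 1 / 2 * ‖T v‖ ^ 2 - I v) (innerSL ℝ (T u) ∘L T - I') u := by
  have hT : HasFDerivAt (fun v => 1 / 2 * ‖T v‖ ^ 2) (innerSL ℝ (T u) ∘L T) u := by
    convert! T.hasFDerivAt.norm_sq.const_mul (1 / 2 : ℝ) using 1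
    ext v
    simp
  exact hT.sub hI

theorem half_norm_sq_sub_smul_le {I' : E →L[ℝ] ℝ} {u : E} (hI : HasFDerivAt I I' u)
    (hu : u ∈ nehariSet fun v => 1 / 2 * ‖T v‖ ^ 2 - I v) {s : ℝ}
    (hs : (s ^ 2 - 1) / 2 * I' u ≤ I (s • u) - I u) :
    1 / 2 * ‖T (s • u)‖ ^ 2 - I (s • u) ≤ 1 / 2 * ‖T u‖ ^ 2 - I u := by
  have hnehari : I' u = ‖T u‖ ^ 2 := by
    have hu' := hu.2
    rw [(hasFDerivAt_half_norm_sq_sub hI).fderiv] at hu'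
    exact (sub_eq_zero.1 (by simpa using hu')).symm
  rw [hnehari] at hs
  rw [map_smul, norm_smul, mul_pow, Real.norm_eq_abs, sq_abs]
  linarith

theorem exists_pos_half_norm_sq_sub_smul_pos (hI : I =o[𝓝 0] fun u => ‖u‖ ^ 2) {w : E}
    (hw : T w ≠ 0) : ∃ s : ℝ, 0 < s ∧ 0 < 1 / 2 * ‖T (s • w)‖ ^ 2 - I (s • w) := by
  have hTw : 0 < ‖T w‖ := norm_pos_iff.2 hw
  have hw_pos : 0 < ‖w‖ := norm_pos_iff.2 fun h => hw (by rw [h, map_zero])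
  have hsmul : Tendsto (fun s : ℝ => s • w) (𝓝[>] 0) (𝓝 0) :=
    tendsto_nhdsWithin_of_tendsto_nhds <|
      (by fun_prop : Continuous fun s : ℝ => s • w).tendsto' 0 0 (zero_smul ℝ w)
  have hc : 0 < ‖T w‖ ^ 2 / (4 * ‖w‖ ^ 2) := by positivity
  obtain ⟨s, hIs, hs⟩ := ((hsmul.eventually (hI.bound hc)).and self_mem_nhdsWithin).exists
  have hs : 0 < s := hs
  refine ⟨s, hs, sub_pos.2 ((le_abs_self _).trans_lt (lt_of_le_of_lt hIs ?_))⟩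
  rw [map_smul, norm_pow, norm_norm, norm_smul, norm_smul, Real.norm_of_nonneg hs.le]
  calc ‖T w‖ ^ 2 / (4 * ‖w‖ ^ 2) * (s * ‖w‖) ^ 2 = 1 / 4 * (s * ‖T w‖) ^ 2 := by
        field_simp
    _ < 1 / 2 * (s * ‖T w‖) ^ 2 :=
        mul_lt_mul_of_pos_right (by norm_num) (pow_pos (mul_pos hs hTw) 2)

theorem eventually_half_norm_sq_sub_smul_nonpos {w : E}
    (hI : Tendsto (fun s : ℝ => I (s • w) / s ^ 2) atTop atTop) :
    ∀ᶠ s : ℝ in atTop, 1 / 2 * ‖T (s • w)‖ ^ 2 - I (s • w) ≤ 0 := by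
  filter_upwards [hI.eventually_ge_atTop (1 / 2 * ‖T w‖ ^ 2), eventually_gt_atTop 0] with s hIs hs
  rw [le_div_iff₀ (by positivity)] at hIs
  rw [map_smul, norm_smul, mul_pow, Real.norm_eq_abs, sq_abs]
  linarith

theorem image_nehariSet_half_norm_sq_sub {I' : E → E →L[ℝ] ℝ} (hT : Function.Injective T)
    (hderiv : ∀ u, HasFDerivAt I (I' u) u)
    (hincr : ∀ u (s : ℝ), 0 < s → (s ^ 2 - 1) / 2 * I' u u ≤ I (s • u) - I u)
    (hzero : I =o[𝓝 0] fun u => ‖u‖ ^ 2)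
    (htop : ∀ w, w ≠ 0 → Tendsto (fun s : ℝ => I (s • w) / s ^ 2) atTop atTop) :
    (fun u => 1 / 2 * ‖T u‖ ^ 2 - I u) '' nehariSet (fun u => 1 / 2 * ‖T u‖ ^ 2 - I u) =
      {y : ℝ | ∃ w : E, w ≠ 0 ∧
        y = sSup ((fun s : ℝ => 1 / 2 * ‖T (s • w)‖ ^ 2 - I (s • w)) '' Ioi 0)} := by
  have hI0 : I 0 = 0 := by simpa using (hzero.bound one_pos).self_of_nhds
  refine image_nehariSet_eq_sSup_rays
    (fun u hu s hs => half_norm_sq_sub_smul_le (hderiv u) hu (hincr u s hs)) fun w hw => ?_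
  exact exists_pos_smul_mem_nehariSet
    (fun u => (hasFDerivAt_half_norm_sq_sub (hderiv u)).differentiableAt) hw (by simp [hI0])
    (exists_pos_half_norm_sq_sub_smul_pos hzero ((map_ne_zero_iff T hT).2 hw))
    (eventually_half_norm_sq_sub_smul_nonpos (htop w hw))

end QuadraticMinus

end Rays

/-! ### Operators on `ℓ²` -/

namespace H1

variable {ι κ : Type*}

theorem hasSum_sq (u : H1 ι) : HasSum (fun i => u i ^ 2) (‖u‖ ^ 2) := by
  simpa using lp.hasSum_norm (p := 2) (by norm_num) u

theorem memℓp_two_of_summable_sq {u : ι → ℝ} (hu : Summable fun i => u i ^ 2) : Memℓp u 2 :=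
  memℓp_gen (by simpa using hu)

theorem abs_apply_le_norm (u : H1 ι) (i : ι) : |u i| ≤ ‖u‖ :=
  lp.norm_apply_le_norm two_ne_zero u i

theorem eventually_abs_apply_lt (u : H1 ι) {δ : ℝ} (hδ : 0 < δ) :
    ∀ᶠ i in cofinite, |u i| < δ := by
  filter_upwards [(hasSum_sq u).summable.tendsto_cofinite_zero.eventually_lt_const (pow_pos hδ 2)]
    with i hi
  exact abs_lt_of_sq_lt_sq hi hδ.le

theorem summable_abs_mul_abs (u v : H1 ι) : Summable fun i => |u i| * |v i| :=
  lp.summable_mul (p := 2) (q := 2) (by simpa using .two_two) u v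

theorem tsum_abs_mul_abs_le (u v : H1 ι) : ∑' i, |u i| * |v i| ≤ ‖u‖ * ‖v‖ :=
  (lp.tsum_mul_le_mul_norm (p := 2) (q := 2) (by simpa using .two_two) u v).2

/-- The bounded operator `ℓ²(ι) → ℓ²(κ)` induced by a linear map into functions on `κ`, with the
bound tested on finite partial sums. -/
def mkCLM (A : H1 ι →ₗ[ℝ] κ → ℝ) (C : ℝ) (hC : 0 ≤ C)
    (hA : ∀ u (t : Finset κ), ∑ k ∈ t, A u k ^ 2 ≤ (C * ‖u‖) ^ 2) : H1 ι →L[ℝ] H1 κ :=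
  LinearMap.mkContinuous
    { toFun := fun u => ⟨A u, memℓp_gen' (C := (C * ‖u‖) ^ 2) (by simpa using hA u)⟩
      map_add' := fun u v => Subtype.ext (map_add A u v)
      map_smul' := fun c u => Subtype.ext (map_smul A c u) }
    C fun u => lp.norm_le_of_forall_sum_le (by norm_num) (by positivity) (by simpa using hA u)

theorem sum_comp_sq_le {p : κ → ι} {D : ℕ} (hp : ∀ i, (p ⁻¹' {i}).encard ≤ D) (u : H1 ι)
    (t : Finset κ) : ∑ k ∈ t, u (p k) ^ 2 ≤ (√D * ‖u‖) ^ 2 := by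
  classical
  have hfibre : ∀ i, ((t.filter fun k => p k = i).card : ℝ) ≤ D := fun i => by
    have hsub : ((t.filter fun k => p k = i : Finset κ) : Set κ) ⊆ p ⁻¹' {i} := fun k hk => by
      simpa using (Finset.mem_filter.1 hk).2
    have := (encard_le_encard hsub).trans (hp i)
    rw [encard_coe_eq_coe_finsetCard] at this
    exact_mod_cast this
  calc ∑ k ∈ t, u (p k) ^ 2
      = ∑ i ∈ t.image p, ((t.filter fun k => p k = i).card : ℝ) * u i ^ 2 := by
        simp only [Finset.sum_comp (fun i => u i ^ 2) p, nsmul_eq_mul]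
    _ ≤ ∑ i ∈ t.image p, D * u i ^ 2 := by gcongr; exact_mod_cast hfibre _
    _ = D * ∑ i ∈ t.image p, u i ^ 2 := (Finset.mul_sum ..).symm
    _ ≤ D * ‖u‖ ^ 2 := by
        gcongr
        exact sum_le_hasSum _ (fun _ _ => sq_nonneg _) (hasSum_sq u)
    _ = (√D * ‖u‖) ^ 2 := by rw [mul_pow, Real.sq_sqrt D.cast_nonneg]

/-- Composition `u ↦ u ∘ p` as an operator on `ℓ²`, bounded when the fibres of `p` have at most
`D` elements. -/
def comp (p : κ → ι) {D : ℕ} (hp : ∀ i, (p ⁻¹' {i}).encard ≤ D) : H1 ι →L[ℝ] H1 κ :=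
  mkCLM
    { toFun := fun u k => u (p k)
      map_add' := fun _ _ => rfl
      map_smul' := fun _ _ => rfl }
    √D (Real.sqrt_nonneg _) (sum_comp_sq_le hp)

/-- Multiplication by a bounded function as an operator on `ℓ²`. -/
def mul (m : ι → ℝ) {C : ℝ} (hC : 0 ≤ C) (hm : ∀ i, |m i| ≤ C) : H1 ι →L[ℝ] H1 ι :=
  mkCLM
    { toFun := fun u i => m i * u i
      map_add' := fun u v => by ext; simp [mul_add]
      map_smul' := fun c u => by ext; simp [mul_left_comm] }
    C hC fun u t => calc
      ∑ i ∈ t, (m i * u i) ^ 2 ≤ ∑ i ∈ t, C ^ 2 * u i ^ 2 := by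
        gcongr with i
        rw [mul_pow]
        exact mul_le_mul_of_nonneg_right (sq_le_sq.2 ((hm i).trans (le_abs_self C))) (sq_nonneg _)
      _ = C ^ 2 * ∑ i ∈ t, u i ^ 2 := (Finset.mul_sum ..).symm
      _ ≤ C ^ 2 * ‖u‖ ^ 2 := by
        gcongr
        exact sum_le_hasSum _ (fun _ _ => sq_nonneg _) (hasSum_sq u)
      _ = (C * ‖u‖) ^ 2 := (mul_pow ..).symm

theorem mul_apply (m : ι → ℝ) {C : ℝ} (hC : 0 ≤ C) (hm : ∀ i, |m i| ≤ C) (u : H1 ι) (i : ι) :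
    mul m hC hm u i = m i * u i := rfl

end H1

/-! ### The energy as a squared norm -/

section Energy

variable {Vtx : Type*} {adj : Vtx → Vtx → Prop} {D : ℕ} {Vp : Vtx → ℝ} {C : ℝ}

/-- The oriented edges of the graph, as pairs of a source and one of its neighbours. -/
abbrev OrientedEdge (adj : Vtx → Vtx → Prop) := Σ x, {y // adj x y}

theorem encard_fibre_source_le (hdeg : ∀ x, {y | adj x y}.encard ≤ D) (x : Vtx) :
    ((fun e : OrientedEdge adj => e.1) ⁻¹' {x}).encard ≤ D := by
  have hmaps : MapsTo (fun e : OrientedEdge adj => e.2.1) ((fun e => e.1) ⁻¹' {x})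
      {y | adj x y} := by
    rintro ⟨_, y, hy⟩ rfl
    exact hy
  have hinj : InjOn (fun e : OrientedEdge adj => e.2.1) ((fun e => e.1) ⁻¹' {x}) :=
    fun _ he _ he' h => Sigma.subtype_ext (he.trans he'.symm) h
  exact (encard_le_encard_of_injOn hmaps hinj).trans (hdeg x)

theorem encard_fibre_target_le (hsym : ∀ x y, adj x y → adj y x)
    (hdeg : ∀ x, {y | adj x y}.encard ≤ D) (x : Vtx) :
    ((fun e : OrientedEdge adj => e.2.1) ⁻¹' {x}).encard ≤ D := by
  have hmaps : MapsTo (fun e : OrientedEdge adj => e.1) ((fun e => e.2.1) ⁻¹' {x})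
      {y | adj x y} := by
    rintro ⟨y, _, hy⟩ rfl
    exact hsym _ _ hy
  have hinj : InjOn (fun e : OrientedEdge adj => e.1) ((fun e => e.2.1) ⁻¹' {x}) :=
    fun _ he _ he' h => Sigma.subtype_ext h (he.trans he'.symm)
  exact (encard_le_encard_of_injOn hmaps hinj).trans (hdeg x)

/-- The discrete gradient, sending `u` to its differences along the oriented edges. -/
def edgeDiff (hsym : ∀ x y, adj x y → adj y x) (hdeg : ∀ x, {y | adj x y}.encard ≤ D) :
    H1 Vtx →L[ℝ] H1 (OrientedEdge adj) :=
  H1.comp _ (encard_fibre_target_le hsym hdeg) - H1.comp _ (encard_fibre_source_le hdeg)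

theorem edgeDiff_apply (hsym : ∀ x y, adj x y → adj y x) (hdeg : ∀ x, {y | adj x y}.encard ≤ D)
    (u : H1 Vtx) (e : OrientedEdge adj) : edgeDiff hsym hdeg u e = u e.2.1 - u e.1 := rfl

theorem hasSum_gradSq (hsym : ∀ x y, adj x y → adj y x) (hdeg : ∀ x, {y | adj x y}.encard ≤ D)
    (u : H1 Vtx) :
    HasSum (gradSq adj fun x => u x) (1 / 2 * ‖edgeDiff hsym hdeg u‖ ^ 2) := by
  have hedges := H1.hasSum_sq (edgeDiff hsym hdeg u)
  have hvertex := hedges.sigma fun x => (hedges.summable.sigma_factor x).hasSum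
  convert! hvertex.mul_left (1 / 2) using 1
  ext x
  simp only [gradSq, gammaProd, edgeDiff_apply, sq]

theorem exists_clm_norm_sq_eq_energy (hsym : ∀ x y, adj x y → adj y x)
    (hdeg : ∀ x, {y | adj x y}.encard ≤ D) (hV_pos : ∀ x, 0 < Vp x) (hV_le : ∀ x, Vp x ≤ C) :
    ∃ T : H1 Vtx →L[ℝ] WithLp 2 (H1 (OrientedEdge adj) × H1 Vtx), Function.Injective T ∧
      ∀ u, ∑' x, (gradSq adj (fun y => u y) x + Vp x * u x ^ 2) = ‖T u‖ ^ 2 := by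
  have hsqrt : ∀ x, |√(Vp x)| ≤ √C := fun x => by
    rw [abs_of_nonneg (Real.sqrt_nonneg _)]
    exact Real.sqrt_le_sqrt (hV_le x)
  let B : H1 Vtx →L[ℝ] H1 Vtx := H1.mul (fun x => √(Vp x)) (Real.sqrt_nonneg C) hsqrt
  have hB : ∀ u x, B u x ^ 2 = Vp x * u x ^ 2 := fun u x => by
    rw [H1.mul_apply, mul_pow, Real.sq_sqrt (hV_pos x).le]
  refine ⟨(WithLp.prodContinuousLinearEquiv 2 ℝ _ _).symm.toContinuousLinearMap ∘L
    ((√(1 / 2) • edgeDiff hsym hdeg).prod B), ?_, fun u => ?_⟩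
  · refine (injective_iff_map_eq_zero _).2 fun u hu => ?_
    have hBu : B u = 0 := congrArg WithLp.snd hu
    ext x
    have : Vp x * u x ^ 2 = 0 := by rw [← hB, hBu]; simp
    simpa [(hV_pos x).ne'] using this
  · have hpot : HasSum (fun x => Vp x * u x ^ 2) (‖B u‖ ^ 2) := by
      simpa only [hB] using H1.hasSum_sq (B u)
    rw [((hasSum_gradSq hsym hdeg u).add hpot).tsum_eq, WithLp.prod_norm_sq_eq_of_L2]
    change _ = ‖√(1 / 2) • edgeDiff hsym hdeg u‖ ^ 2 + ‖B u‖ ^ 2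
    rw [norm_smul, mul_pow, Real.norm_eq_abs, sq_abs, Real.sq_sqrt (by norm_num)]

end Energy

/-! ### Scalar estimates -/

section Scalar
variable {g G : ℝ → ℝ}

theorem mul_apply_mul_le_mul_apply_mul (hneg : MonotoneOn (fun t => g t / |t|) (Iio 0))
    (hpos : MonotoneOn (fun t => g t / |t|) (Ioi 0)) (t : ℝ) {r s : ℝ} (hr : 0 < r) (hrs : r ≤ s) :
    s * (g (r * t) * t) ≤ r * (g (s * t) * t) := by
  have hs : 0 < s := hr.trans_le hrs
  rcases lt_trichotomy t 0 with ht | rfl | ht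
  · have hrt : r * t < 0 := mul_neg_of_pos_of_neg hr ht
    have hst : s * t < 0 := mul_neg_of_pos_of_neg hs ht
    have hquot := hneg hst hrt (mul_le_mul_of_nonpos_right hrs ht.le)
    simp only [abs_of_neg hrt, abs_of_neg hst] at hquot
    rw [div_le_div_iff₀ (neg_pos.2 hst) (neg_pos.2 hrt)] at hquot
    linarith
  · simp
  · have hrt : 0 < r * t := mul_pos hr ht
    have hst : 0 < s * t := mul_pos hs ht
    have hquot := hpos hrt hst (mul_le_mul_of_nonneg_right hrs ht.le)
    simp only [abs_of_pos hrt, abs_of_pos hst] at hquot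
    rw [div_le_div_iff₀ hrt hst] at hquot
    linarith

theorem sq_sub_one_half_mul_le_sub (hG : ∀ t, HasDerivAt G (g t) t)
    (hneg : MonotoneOn (fun t => g t / |t|) (Iio 0))
    (hpos : MonotoneOn (fun t => g t / |t|) (Ioi 0)) (t : ℝ) {s : ℝ} (hs : 0 < s) :
    (s ^ 2 - 1) / 2 * (g t * t) ≤ G (s * t) - G t := by
  let k : ℝ → ℝ := fun r => G (r * t) - r ^ 2 / 2 * (g t * t)
  have hk : ∀ r, HasDerivAt k (g (r * t) * t - r * (g t * t)) r := fun r => by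
    have hray : HasDerivAt (fun r : ℝ => r * t) t r := by
      simpa using (hasDerivAt_id r).mul_const t
    have hquad : HasDerivAt (fun r : ℝ => r ^ 2 / 2 * (g t * t)) (r * (g t * t)) r := by
      simpa using ((hasDerivAt_pow 2 r).div_const 2).mul_const (g t * t)
    exact ((hG (r * t)).comp r hray).sub hquad
  have hmin : IsMinOn k (Ioi 0) 1 := by
    refine isMinOn_Ioi_of_deriv (hk 1).continuousAt
      (fun r _ => (hk r).differentiableAt.differentiableWithinAt)
      (fun r _ => (hk r).differentiableAt.differentiableWithinAt) (fun r hr => ?_) fun r hr => ?_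
    · have := mul_apply_mul_le_mul_apply_mul hneg hpos t hr.1 hr.2.le
      rw [(hk r).deriv]
      simpa using this
    · have := mul_apply_mul_le_mul_apply_mul hneg hpos t one_pos (le_of_lt hr)
      rw [(hk r).deriv]
      simpa using this
  have hk1 : k 1 ≤ k s := hmin hs
  simp only [k, one_mul, one_pow] at hk1
  linarith

theorem apply_zero_le_of_monotoneOn_div_abs (hG : ∀ t, HasDerivAt G (g t) t)
    (hneg : MonotoneOn (fun t => g t / |t|) (Iio 0))
    (hpos : MonotoneOn (fun t => g t / |t|) (Ioi 0)) (hg : g =o[𝓝 0] id) (t : ℝ) :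
    G 0 ≤ G t := by
  have hray : Tendsto (fun r : ℝ => r * t) (𝓝[>] 0) (𝓝 0) :=
    tendsto_nhdsWithin_of_tendsto_nhds <| by
      simpa using (continuous_mul_const t).tendsto (0 : ℝ)
  have hgr : Tendsto (fun r => g (r * t) / r) (𝓝[>] 0) (𝓝 0) := by
    refine IsLittleO.tendsto_div_nhds_zero ((hg.comp_tendsto hray).trans_isBigO ?_)
    exact (isBigO_refl (fun r : ℝ => r) _).mul (isBigO_const_const t one_ne_zero _) |>.congr_right
      fun r => mul_one r
  have hlower : Tendsto (fun r => (1 - r ^ 2) / 2 * (g (r * t) / r * t) + G (r * t))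
      (𝓝[>] 0) (𝓝 (G 0)) := by
    have hr : Tendsto (fun r : ℝ => (1 - r ^ 2) / 2) (𝓝[>] 0) (𝓝 ((1 - 0 ^ 2) / 2)) :=
      tendsto_nhdsWithin_of_tendsto_nhds <| Continuous.tendsto (by fun_prop) 0
    simpa using (hr.mul (hgr.mul_const t)).add ((hG 0).continuousAt.tendsto.comp hray)
  refine le_of_tendsto hlower ?_
  filter_upwards [self_mem_nhdsWithin] with r hr
  have hr : 0 < r := hr
  have hincr := sq_sub_one_half_mul_le_sub hG hneg hpos (r * t) (inv_pos.2 hr)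
  rw [inv_mul_cancel_left₀ hr.ne'] at hincr
  calc (1 - r ^ 2) / 2 * (g (r * t) / r * t) + G (r * t)
      = (r⁻¹ ^ 2 - 1) / 2 * (g (r * t) * (r * t)) + G (r * t) := by field_simp
    _ ≤ G t := by linarith

theorem abs_taylor_remainder_le (hG : ∀ t, HasDerivAt G (g t) t) {ε δ : ℝ} (hε : 0 ≤ ε)
    (hg : ∀ t, |t| < δ → |g t| ≤ ε * |t|) {t v : ℝ} (htv : |t| + |v| < δ) :
    |G (t + v) - G t - g t * v| ≤ 2 * ε * (|t| + |v|) * |v| := by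
  set r := |t| + |v|
  have hsmall : ∀ y ∈ Icc (-r) r, |g y| ≤ ε * r := fun y hy =>
    (hg y ((abs_le.2 hy).trans_lt htv)).trans (by gcongr; exact abs_le.2 hy)
  have ht : t ∈ Icc (-r) r := abs_le.1 (le_add_of_nonneg_right (abs_nonneg v))
  have htv' : t + v ∈ Icc (-r) r := abs_le.1 (abs_add_le t v)
  have hderiv : ∀ y, HasDerivAt (fun y => G y - g t * y) (g y - g t) y := fun y =>
    (hG y).sub (by simpa using (hasDerivAt_id y).const_mul (g t))
  have hbound : ∀ y ∈ Icc (-r) r, |g y - g t| ≤ 2 * ε * r := fun y hy =>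
    (abs_sub _ _).trans (by linarith [hsmall y hy, hsmall t ht])
  have hmvt := (convex_Icc (-r) r).norm_image_sub_le_of_norm_hasDerivWithin_le
    (fun y _ => (hderiv y).hasDerivWithinAt) hbound ht htv'
  simp only [Real.norm_eq_abs, add_sub_cancel_left] at hmvt
  convert! hmvt using 2
  ring

end Scalar

/-! ### Superposition operators on `ℓ²` -/

/-- `f` is a superposition nonlinearity with `f x t = o(t)` as `t → 0` uniformly in `x`, and `F x`
is the primitive of `f x` vanishing at `0`. -/
structure IsSmallPrimitive {ι : Type*} (f F : ι → ℝ → ℝ) : Prop where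
  hasDerivAt : ∀ x t, HasDerivAt (F x) (f x t) t
  map_zero : ∀ x, F x 0 = 0
  small : ∀ ε > 0, ∃ δ > 0, ∀ x t, |t| < δ → |f x t| ≤ ε * |t|

namespace IsSmallPrimitive

variable {ι : Type*} {f F : ι → ℝ → ℝ}

theorem isLittleO_id (h : IsSmallPrimitive f F) (x : ι) : f x =o[𝓝 0] id :=
  isLittleO_iff.2 fun ε hε =>
    let ⟨_, hδ, hf⟩ := h.small ε hε
    Metric.eventually_nhds_iff.2 ⟨_, hδ, fun _ ht => hf x _ (by simpa using ht)⟩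

theorem abs_le_mul_sq (h : IsSmallPrimitive f F) {ε δ : ℝ} (hε : 0 ≤ ε)
    (hf : ∀ x t, |t| < δ → |f x t| ≤ ε * |t|) (x : ι) {t : ℝ} (ht : |t| < δ) :
    |F x t| ≤ 2 * ε * t ^ 2 := by
  have hf0 : f x 0 = 0 := by simpa using hf x 0 (by simpa using (abs_nonneg t).trans_lt ht)
  have := abs_taylor_remainder_le (h.hasDerivAt x) hε (hf x) (t := 0) (v := t) (by simpa using ht)
  simpa [h.map_zero, hf0, mul_assoc, ← sq] using this

theorem summable_apply (h : IsSmallPrimitive f F) (u : H1 ι) : Summable fun x => F x (u x) := by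
  obtain ⟨δ, hδ, hf⟩ := h.small 1 one_pos
  exact .of_norm_bounded_eventually ((H1.hasSum_sq u).summable.mul_left (2 * 1)) <|
    (H1.eventually_abs_apply_lt u hδ).mono fun x hx => h.abs_le_mul_sq zero_le_one hf x hx

theorem tsum_isLittleO_norm_sq (h : IsSmallPrimitive f F) :
    (fun u : H1 ι => ∑' x, F x (u x)) =o[𝓝 0] fun u => ‖u‖ ^ 2 := by
  refine isLittleO_iff.2 fun c hc => ?_
  obtain ⟨δ, hδ, hf⟩ := h.small (c / 2) (half_pos hc)
  filter_upwards [Metric.ball_mem_nhds 0 hδ] with u hu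
  have hu : ‖u‖ < δ := mem_ball_zero_iff.1 hu
  rw [norm_pow, norm_norm]
  refine tsum_of_norm_bounded ((H1.hasSum_sq u).mul_left c) fun x => ?_
  have := h.abs_le_mul_sq (half_pos hc).le hf x ((H1.abs_apply_le_norm u x).trans_lt hu)
  rwa [mul_div_cancel₀ c two_ne_zero] at this

theorem memℓp_superposition (h : IsSmallPrimitive f F) (u : H1 ι) :
    Memℓp (fun x => f x (u x)) 2 := by
  obtain ⟨δ, hδ, hf⟩ := h.small 1 one_pos
  refine H1.memℓp_two_of_summable_sq <|
    .of_norm_bounded_eventually (H1.hasSum_sq u).summable ?_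
  filter_upwards [H1.eventually_abs_apply_lt u hδ] with x hx
  rw [Real.norm_of_nonneg (sq_nonneg _)]
  exact sq_le_sq.2 (by simpa only [one_mul] using hf x _ hx)

/-- The superposition operator `u ↦ f(·, u(·))` of `f` on `ℓ²`. -/
def superposition (h : IsSmallPrimitive f F) (u : H1 ι) : H1 ι :=
  ⟨fun x => f x (u x), h.memℓp_superposition u⟩

theorem hasSum_superposition_mul (h : IsSmallPrimitive f F) (u v : H1 ι) :
    HasSum (fun x => f x (u x) * v x) (innerSL ℝ (h.superposition u) v) := by
  convert! lp.hasSum_inner (𝕜 := ℝ) (h.superposition u) v using 1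
  ext x
  exact mul_comm _ _

theorem isLittleO_remainder (h : IsSmallPrimitive f F) (u : H1 ι) (x : ι) :
    (fun v : H1 ι => F x (u x + v x) - F x (u x) - f x (u x) * v x) =o[𝓝 0] fun v => v := by
  have heval : Tendsto (fun v : H1 ι => v x) (𝓝 0) (𝓝 0) :=
    squeeze_zero_norm (fun v => H1.abs_apply_le_norm v x) tendsto_norm_zero
  have hscalar := (hasDerivAt_iff_isLittleO_nhds_zero.1 (h.hasDerivAt x (u x))).comp_tendsto heval
  refine (hscalar.congr_left fun v => ?_).trans_isBigO
    (.of_bound' (.of_forall fun v => H1.abs_apply_le_norm v x))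
  simp [mul_comm]

theorem abs_tsum_remainder_le (h : IsSmallPrimitive f F) {ε δ : ℝ} (hε : 0 ≤ ε)
    (hf : ∀ x t, |t| < δ → |f x t| ≤ ε * |t|) (u v : H1 ι) (S : Set ι)
    (huv : ∀ x ∈ S, |u x| + |v x| < δ) :
    |∑' x : S, (F x (u x + v x) - F x (u x) - f x (u x) * v x)| ≤
      2 * ε * ((‖u‖ + ‖v‖) * ‖v‖) := by
  have hmajor : Summable fun x => |u x| * |v x| + |v x| * |v x| :=
    (H1.summable_abs_mul_abs u v).add (H1.summable_abs_mul_abs v v)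
  calc |∑' x : S, (F x (u x + v x) - F x (u x) - f x (u x) * v x)|
      ≤ ∑' x : S, 2 * ε * (|u x| * |v x| + |v x| * |v x|) := by
        rw [← Real.norm_eq_abs]
        refine tsum_of_norm_bounded ((hmajor.subtype S).mul_left (2 * ε)).hasSum fun x => ?_
        have := abs_taylor_remainder_le (h.hasDerivAt x) hε (hf x) (huv x x.2)
        rwa [mul_assoc, add_mul] at this
    _ = 2 * ε * ∑' x : S, (|u x| * |v x| + |v x| * |v x|) := tsum_mul_left
    _ ≤ 2 * ε * ∑' x, (|u x| * |v x| + |v x| * |v x|) := by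
        gcongr
        exact hmajor.tsum_subtype_le _ S fun x => by positivity
    _ ≤ 2 * ε * ((‖u‖ + ‖v‖) * ‖v‖) := by
        rw [(H1.summable_abs_mul_abs u v).tsum_add (H1.summable_abs_mul_abs v v), add_mul]
        gcongr <;> exact H1.tsum_abs_mul_abs_le _ _

theorem isLittleO_tsum_remainder (h : IsSmallPrimitive f F) (u : H1 ι) :
    (fun v : H1 ι => ∑' x, (F x (u x + v x) - F x (u x) - f x (u x) * v x)) =o[𝓝 0]
      fun v => v := by
  refine isLittleO_iff.2 fun c hc => ?_
  have hε : 0 < c / (4 * (‖u‖ + 1)) := by positivity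
  obtain ⟨δ, hδ, hf⟩ := h.small _ hε
  have hcofinite := H1.eventually_abs_apply_lt u (half_pos hδ)
  let S : Finset ι := hcofinite.toFinset
  have hfinite := IsLittleO.fun_sum fun x (_ : x ∈ S) => h.isLittleO_remainder u x
  filter_upwards [hfinite.bound (half_pos hc), Metric.ball_mem_nhds 0 (half_pos hδ),
    Metric.ball_mem_nhds 0 one_pos] with v hSv hvδ hv1
  have hvδ : ‖v‖ < δ / 2 := mem_ball_zero_iff.1 hvδ
  have hv1 : ‖v‖ < 1 := mem_ball_zero_iff.1 hv1
  have hsum : Summable fun x => F x (u x + v x) - F x (u x) - f x (u x) * v x :=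
    ((h.summable_apply (u + v)).sub (h.summable_apply u)).sub
      (h.hasSum_superposition_mul u v).summable
  have htail := h.abs_tsum_remainder_le hε.le hf u v (S : Set ι)ᶜ fun x hx => by
    have hux : |u x| < δ / 2 := not_not.1 (mt hcofinite.mem_toFinset.2 hx)
    linarith [H1.abs_apply_le_norm v x]
  rw [← hsum.sum_add_tsum_subtype_compl S]
  calc _ ≤ c / 2 * ‖v‖ + 2 * (c / (4 * (‖u‖ + 1))) * ((‖u‖ + ‖v‖) * ‖v‖) :=
        (norm_add_le _ _).trans (add_le_add hSv htail)
    _ ≤ c / 2 * ‖v‖ + 2 * (c / (4 * (‖u‖ + 1))) * ((‖u‖ + 1) * ‖v‖) := by gcongr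
    _ = c * ‖v‖ := by field_simp; ring

theorem hasFDerivAt_tsum (h : IsSmallPrimitive f F) (u : H1 ι) :
    HasFDerivAt (fun u : H1 ι => ∑' x, F x (u x)) (innerSL ℝ (h.superposition u)) u := by
  refine hasFDerivAt_iff_isLittleO_nhds_zero.2 <|
    (h.isLittleO_tsum_remainder u).congr_left fun v => ?_
  have huv := (h.summable_apply (u + v)).hasSum
  exact ((huv.sub (h.summable_apply u).hasSum).sub (h.hasSum_superposition_mul u v)).tsum_eq

theorem sq_sub_one_half_mul_le_tsum_sub (h : IsSmallPrimitive f F)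
    (hneg : ∀ x, MonotoneOn (fun t => f x t / |t|) (Iio 0))
    (hpos : ∀ x, MonotoneOn (fun t => f x t / |t|) (Ioi 0)) (u : H1 ι) {s : ℝ} (hs : 0 < s) :
    (s ^ 2 - 1) / 2 * innerSL ℝ (h.superposition u) u ≤
      ∑' x, F x ((s • u) x) - ∑' x, F x (u x) :=
  hasSum_le (fun x => sq_sub_one_half_mul_le_sub (h.hasDerivAt x) (hneg x) (hpos x) (u x) hs)
    ((h.hasSum_superposition_mul u u).mul_left ((s ^ 2 - 1) / 2))
    ((h.summable_apply (s • u)).hasSum.sub (h.summable_apply u).hasSum)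

theorem tendsto_tsum_smul_div_sq (h : IsSmallPrimitive f F)
    (hneg : ∀ x, MonotoneOn (fun t => f x t / |t|) (Iio 0))
    (hpos : ∀ x, MonotoneOn (fun t => f x t / |t|) (Ioi 0))
    (hsuper : ∀ x, Tendsto (fun t => F x t / t ^ 2) (cocompact ℝ) atTop) {w : H1 ι} (hw : w ≠ 0) :
    Tendsto (fun s : ℝ => (∑' x, F x ((s • w) x)) / s ^ 2) atTop atTop := by
  obtain ⟨x, hx⟩ : ∃ x, w x ≠ 0 := by
    by_contra! hzero
    exact hw (lp.ext (funext hzero))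
  have hF : ∀ y t, 0 ≤ F y t := fun y t => by
    simpa only [h.map_zero] using
      apply_zero_le_of_monotoneOn_div_abs (h.hasDerivAt y) (hneg y) (hpos y) (h.isLittleO_id y) t
  have hray : Tendsto (fun s : ℝ => s * w x) atTop (cocompact ℝ) :=
    (Homeomorph.mulRight₀ (w x) hx).isClosedEmbedding.tendsto_cocompact.mono_left atTop_le_cocompact
  refine tendsto_atTop_mono (fun s => ?_)
    (((hsuper x).comp hray).atTop_mul_const (pow_pos (abs_pos.2 hx) 2))
  calc F x (s * w x) / (s * w x) ^ 2 * |w x| ^ 2 = F x ((s • w) x) / s ^ 2 := by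
        rw [sq_abs, mul_pow, div_mul_eq_mul_div, mul_div_mul_right _ _ (pow_ne_zero 2 hx)]
        rfl
    _ ≤ (∑' y, F y ((s • w) y)) / s ^ 2 := by
        gcongr
        exact (h.summable_apply (s • w)).le_tsum x fun y _ => hF y _

end IsSmallPrimitive

theorem isSmallPrimitive_of_eq_integral {ι : Type*} {f F : ι → ℝ → ℝ}
    (hcont : ∀ x, Continuous (f x))
    (hsmall : ∀ ε > 0, ∃ δ > 0, ∀ x t, t ≠ 0 → |t| < δ → |f x t| ≤ ε * |t|)
    (hF : ∀ x t, F x t = ∫ s in (0 : ℝ)..t, f x s) : IsSmallPrimitive f F where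
  hasDerivAt x t := by
    rw [funext (hF x)]
    exact (hcont x).integral_hasStrictDerivAt 0 t |>.hasDerivAt
  map_zero x := by rw [hF, intervalIntegral.integral_same]
  small ε hε := by
    obtain ⟨δ, hδ, hf⟩ := hsmall ε hε
    refine ⟨δ, hδ, fun x t ht => ?_⟩
    rcases ne_or_eq t 0 with ht0 | rfl
    · exact hf x t ht0 ht
    have hclosed : IsClosed {t | |f x t| ≤ ε * |t|} := isClosed_le (hcont x).abs (by fun_prop)
    have hpunctured : ∀ᶠ t in 𝓝[≠] 0, |f x t| ≤ ε * |t| := by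
      filter_upwards [self_mem_nhdsWithin, nhdsWithin_le_nhds (Metric.ball_mem_nhds 0 hδ)]
        with t ht0 htδ
      exact hf x t ht0 (by simpa using htδ)
    exact hclosed.mem_of_frequently_of_tendsto hpunctured.frequently
      (tendsto_nhdsWithin_of_tendsto_nhds tendsto_id)

theorem tendsto_cocompact_atTop_of_forall_exists_le {φ : ℝ → ℝ}
    (hφ : ∀ M : ℝ, ∃ R : ℝ, ∀ t, R ≤ |t| → M ≤ φ t) : Tendsto φ (cocompact ℝ) atTop :=
  tendsto_atTop.2 fun M =>
    let ⟨R, hR⟩ := hφ M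
    (tendsto_norm_cocompact_atTop.eventually_ge_atTop R).mono hR

theorem stmt16_general {Vtx : Type*} {adj : Vtx → Vtx → Prop} {D : ℕ}
    (hsym : ∀ x y, adj x y → adj y x) (hdeg : ∀ x, {y | adj x y}.encard ≤ D)
    {Vp : Vtx → ℝ} {C : ℝ} (hV_pos : ∀ x, 0 < Vp x) (hV_le : ∀ x, Vp x ≤ C)
    {f F : Vtx → ℝ → ℝ} (hF : IsSmallPrimitive f F)
    (hneg : ∀ x, MonotoneOn (fun t => f x t / |t|) (Iio 0))
    (hpos : ∀ x, MonotoneOn (fun t => f x t / |t|) (Ioi 0))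
    (hsuper : ∀ x, Tendsto (fun t => F x t / t ^ 2) (cocompact ℝ) atTop) :
    PhiF adj Vp F '' Nehari adj Vp F =
      {y : ℝ | ∃ w : H1 Vtx, w ≠ 0 ∧
        y = sSup ((fun s : ℝ => PhiF adj Vp F (s • w)) '' Ioi 0)} := by
  obtain ⟨T, hT, hTenergy⟩ := exists_clm_norm_sq_eq_energy hsym hdeg hV_pos hV_le
  have hPhi : PhiF adj Vp F = fun u => 1 / 2 * ‖T u‖ ^ 2 - ∑' x, F x (u x) :=
    funext fun u => congrArg (1 / 2 * · - ∑' x, F x (u x)) (hTenergy u)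
  change PhiF adj Vp F '' nehariSet (PhiF adj Vp F) = _
  rw [hPhi]
  exact image_nehariSet_half_norm_sq_sub hT hF.hasFDerivAt_tsum
    (fun u _ => hF.sq_sub_one_half_mul_le_tsum_sub hneg hpos u) hF.tsum_isLittleO_norm_sq
    fun _ => hF.tendsto_tsum_smul_div_sq hneg hpos hsuper

end

/-- The min-max characterization of the ground state level:
`inf_N Φ = inf_{w ≠ 0} sup_{s>0} Φ(sw)`. -/
theorem stmt16
    {Vtx : Type*} (adj : Vtx → Vtx → Prop) (D : ℕ)
    (hsym : ∀ x y, adj x y → adj y x)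
    (hirr : ∀ x, ¬ adj x x)
    (hfin : ∀ x, {y | adj x y}.Finite)
    (hdeg : ∀ x, {y | adj x y}.ncard ≤ D)
    (Vp : Vtx → ℝ) (C1 C2 : ℝ) (hC1 : 0 < C1)
    (hVbd : ∀ x, C1 ≤ Vp x ∧ Vp x ≤ C2)
    (f : Vtx → ℝ → ℝ) (hcont : ∀ x, Continuous (f x))
    (a q : ℝ) (ha : 0 < a) (hq : 2 < q)
    (hgrowth : ∀ x t, |f x t| ≤ a * (|t| + |t| ^ (q - 1)))
    (hsmall : ∀ ε > 0, ∃ δ > 0, ∀ x t, t ≠ 0 → |t| < δ → |f x t| ≤ ε * |t|)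
    (hmono : ∀ x, StrictMonoOn (fun t => f x t / |t|) (Set.Iio 0) ∧
             StrictMonoOn (fun t => f x t / |t|) (Set.Ioi 0))
    (F : Vtx → ℝ → ℝ) (hF : ∀ x t, F x t = ∫ s in (0:ℝ)..t, f x s)
    (hsuper : ∀ M : ℝ, ∃ R > 0, ∀ x t, R ≤ |t| → M ≤ F x t / t ^ 2)
    :
    sInf (PhiF adj Vp F '' Nehari adj Vp F) =
      sInf {y : ℝ | ∃ w : H1 Vtx, w ≠ 0 ∧
        y = sSup ((fun s : ℝ => PhiF adj Vp F (s • w)) '' Set.Ioi 0)} :=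
  congrArg sInf <| stmt16_general hsym
    (fun x => (hfin x).cast_ncard_eq ▸ Nat.cast_le.2 (hdeg x))
    (fun x => hC1.trans_le (hVbd x).1) (fun x => (hVbd x).2)
    (isSmallPrimitive_of_eq_integral hcont hsmall hF)
    (fun x => (hmono x).1.monotoneOn) (fun x => (hmono x).2.monotoneOn) fun x =>
      tendsto_cocompact_atTop_of_forall_exists_le fun M =>
        let ⟨R, _, hR⟩ := hsuper M; ⟨R, hR x⟩
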